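/- Consider multivariate hypergeometric sampling: an urn contains n = Σ_{α∈[m]} n_α balls, with n_α ≥ 1 balls of color α for each α ∈ [m]; a sample of s ∈ {0,1,…,n} distinct balls is drawn uniformly at random without replacement, and M_α denotes the number of balls of color α in the sample. Let w_α > 0 be weights and d_α ∈ ℤ thresholds such that every indicator 𝟙(M_α ≥ d_α) (respectively 𝟙(M_α ≠ d_α)) is non-constant, and set Y_ge = Σ_{α∈[m]} w_α 𝟙(M_α ≥ d_α) and Y_ne = Σ_{α∈[m]} w_α 𝟙(M_α ≠ d_α), with |w| = max_α w_α. Then there exists a coupling of Y_ge to a variable Y_ge^s having the Y_ge-size bias distribution satisfying Y_ge^s ≤ Y_ge + |w| almost surely, and a coupling of Y_ne to a variable Y_ne^s having the Y_ne-size bias distribution satisfying Y_ne^s ≤ Y_ne + 2|w| almost surely. -/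

import Mathlib

open MeasureTheory ProbabilityTheory

/-- There is a bounded size bias coupling for a nonnegative random variable with law
`μY`: a joint law `ν` of a pair `(Y, Yˢ)` such that `Y` has law `μY`, `Yˢ` has the
`Y`-size bias distribution (`E[Y f(Y)] = E[Y] E[f(Yˢ)]` for all bounded measurable `f`),
and `Yˢ ≤ Y + c` almost surely. -/
def ExistsBoundedSizeBiasCoupling (μY : Measure ℝ) (c : ℝ) : Prop :=
  ∃ ν : Measure (ℝ × ℝ), IsProbabilityMeasure ν ∧
    Measure.map Prod.fst ν = μY ∧
    (∀ f : ℝ → ℝ, Measurable f → (∃ C : ℝ, ∀ x, |f x| ≤ C) →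
      ∫ q, q.1 * f q.1 ∂ν = (∫ q, q.1 ∂ν) * ∫ q, f q.2 ∂ν) ∧
    (∀ᵐ q ∂ν, q.2 ≤ q.1 + c)

/-!
A weighted sum of indicators is size biased by conditioning on one of the events, chosen with
probability proportional to its contribution to the mean. So it suffices to couple the sample `T`
with the sample `T'` conditioned on an event that depends only on the number of elements of one
color class `A`, in such a way that few other color counts increase. Both laws are invariant under
the permutations preserving `A`; averaging a coupling over these permutations shows that it is
enough to couple so that some such permutation moves `T'` close to `T`, and this is a property of
the two counts `#(T ∩ A)` and `#(T' ∩ A)` alone.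

For the event `#(T ∩ A) ≥ d` the conditioning can only add elements of `A`, so that no other count
needs to increase. For `#(T ∩ A) ≠ d`, log-concavity of the hypergeometric law of the count makes
its distribution function and that of the conditioned count interlace, so the quantile coupling
keeps the counts within one of each other: at most one element is exchanged, which affects at most
two colors.
-/

open Set
open scoped ENNReal Finset Pointwise symmDiff

section Coupling

variable {X Y : Type*} [MeasurableSpace X] [MeasurableSpace Y] {R : X → Y → Prop}
  {μ : Measure X} {ν : Measure Y}

theorem measure_bind_eq_sum [Countable X] [MeasurableSingletonClass X] (μ : Measure X)
    (κ : X → Measure Y) : μ.bind κ = Measure.sum fun x => μ {x} • κ x := by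
  conv_lhs => rw [← Measure.sum_smul_dirac μ]
  rw [Measure.bind_sum _ _ Measurable.of_discrete.aemeasurable]
  simp_rw [Measure.bind_smul, Measure.dirac_bind (f := κ) .of_discrete]

theorem measure_map_bind {Z : Type*} [MeasurableSpace Z] [DiscreteMeasurableSpace X] (μ : Measure X)
    (κ : X → Measure Y) {f : Y → Z} (hf : Measurable f) :
    (μ.bind κ).map f = μ.bind fun x => (κ x).map f := by
  ext E hE
  rw [Measure.map_apply hf hE, Measure.bind_apply (hf hE) Measurable.of_discrete.aemeasurable,
    Measure.bind_apply hE Measurable.of_discrete.aemeasurable]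
  simp_rw [Measure.map_apply hf hE]

theorem measure_bind_map {Z : Type*} [MeasurableSpace Z] [DiscreteMeasurableSpace Y] {f : X → Y}
    (κ : Y → Measure Z) (hf : Measurable f) :
    (μ.map f).bind κ = μ.bind (κ ∘ f) := by
  rw [Measure.bind, Measure.bind, Measure.map_map .of_discrete hf]

theorem measure_bind_cond_fiber [Countable Y] [MeasurableSingletonClass Y] (μ : Measure X)
    [IsFiniteMeasure μ] {f : X → Y} (hf : Measurable f) :
    ((μ.map f).bind fun y => μ[|f ⁻¹' {y}]) = μ := by
  have hrestrict (y) : μ.map f {y} • μ[|f ⁻¹' {y}] = μ.restrict (f ⁻¹' {y}) := by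
    ext E hE
    rw [Measure.map_apply hf (.singleton y), Measure.smul_apply, smul_eq_mul, mul_comm,
      cond_mul_eq_inter (hf (.singleton y)), Measure.restrict_apply hE, inter_comm]
  rw [measure_bind_eq_sum, funext hrestrict,
    ← Measure.restrict_iUnion (fun _ _ h => (disjoint_singleton.2 h).preimage f)
      fun y => hf (.singleton y),
    ← preimage_iUnion, iUnion_of_singleton, preimage_univ, Measure.restrict_univ]

section OrbitAverage

variable (G : Type*) [Group G] [Fintype G] [MulAction G X] [MulAction G Y]

/-- The law of `g • x` for a uniformly random `g : G`, by which couplings are symmetrized. -/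
noncomputable def orbitAverage (x : X) : Measure X :=
  (Fintype.card G : ℝ≥0∞)⁻¹ • ∑ g : G, Measure.dirac (g • x)

theorem orbitAverage_smul (h : G) (x : X) : orbitAverage G (h • x) = orbitAverage G x := by
  simp only [orbitAverage, smul_smul]
  congr 1
  exact Equiv.sum_comp (Equiv.mulRight h) fun g => Measure.dirac (g • x)

theorem measure_bind_orbitAverage [DiscreteMeasurableSpace X] (μ : Measure X)
    [SMulInvariantMeasure G X μ] : μ.bind (orbitAverage G) = μ := by
  ext E hE
  have hg (g : G) : ∫⁻ x, Measure.dirac (g • x) E ∂μ = μ E := by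
    rw [← measure_preimage_smul μ g E, ← lintegral_indicator_one .of_discrete]
    exact lintegral_congr fun x => Measure.dirac_apply' _ hE
  rw [Measure.bind_apply hE Measurable.of_discrete.aemeasurable]
  simp only [orbitAverage, Measure.smul_apply, Measure.coe_finsetSum, Finset.sum_apply, smul_eq_mul]
  rw [lintegral_const_mul _ .of_discrete, lintegral_finsetSum _ fun _ _ => .of_discrete]
  simp only [hg, Finset.sum_const, Finset.card_univ, nsmul_eq_mul]
  rw [← mul_assoc, ENNReal.inv_mul_cancel (by simp) (by simp), one_mul]

end OrbitAverage

/-- The measures `μ` and `ν` are the marginals of some measure on `X × Y`, a coupling of them,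
under which the coordinates are almost surely related by `R`. -/
def HasCoupling (R : X → Y → Prop) (μ : Measure X) (ν : Measure Y) : Prop :=
  ∃ π : Measure (X × Y), π.fst = μ ∧ π.snd = ν ∧ ∀ᵐ p ∂π, R p.1 p.2

namespace HasCoupling

theorem mono_ae {R' : X → Y → Prop} {p : X → Prop} {q : Y → Prop} (h : HasCoupling R μ ν)
    (hp : ∀ᵐ x ∂μ, p x) (hq : ∀ᵐ y ∂ν, q y) (hR : ∀ x y, p x → q y → R x y → R' x y) :
    HasCoupling R' μ ν := by
  obtain ⟨π, rfl, rfl, hπ⟩ := h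
  refine ⟨π, rfl, rfl, ?_⟩
  filter_upwards [ae_of_ae_map measurable_fst.aemeasurable hp,
    ae_of_ae_map measurable_snd.aemeasurable hq, hπ] with z hz hz' hzR
  exact hR _ _ hz hz' hzR

theorem mono {R' : X → Y → Prop} (h : HasCoupling R μ ν) (hR : ∀ x y, R x y → R' x y) :
    HasCoupling R' μ ν := by
  obtain ⟨π, hμ, hν, hπ⟩ := h
  exact ⟨π, hμ, hν, hπ.mono fun p => hR p.1 p.2⟩

theorem refl [MeasurableEq X] (μ : Measure X) : HasCoupling Eq μ μ :=
  ⟨μ.map fun x => (x, x), by rw [Measure.fst_map_prodMk measurable_id', Measure.map_id'],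
    by rw [Measure.snd_map_prodMk measurable_id', Measure.map_id'],
    (ae_map_iff (measurable_id'.prodMk measurable_id').aemeasurable measurableSet_diagonal).2
      (.of_forall fun _ => rfl)⟩

theorem of_ae [IsProbabilityMeasure μ] [IsProbabilityMeasure ν] {p : X → Prop} {q : Y → Prop}
    (hp : ∀ᵐ x ∂μ, p x) (hq : ∀ᵐ y ∂ν, q y) : HasCoupling (fun x y => p x ∧ q y) μ ν :=
  ⟨μ.prod ν, Measure.fst_prod, Measure.snd_prod,
    (Measure.quasiMeasurePreserving_fst.ae hp).and (Measure.quasiMeasurePreserving_snd.ae hq)⟩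

theorem sum {ι : Type*} [Fintype ι] {ν : ι → Measure Y} {a : ι → ℝ≥0∞} (ha : ∑ i, a i = 1)
    (h : ∀ i, HasCoupling R μ (ν i)) :
    HasCoupling R μ (∑ i, a i • ν i) := by
  choose π hμ hν hR using h
  refine ⟨∑ i, a i • π i, ?_, ?_, ?_⟩
  · have hfst (i : ι) : (π i).map Prod.fst = μ := hμ i
    simp_rw [Measure.fst, Measure.map_finset_sum measurable_fst.aemeasurable, Measure.map_smul,
      hfst, ← Finset.sum_smul, ha, one_smul]
  · have hsnd (i : ι) : (π i).map Prod.snd = ν i := hν i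
    simp_rw [Measure.snd, Measure.map_finset_sum measurable_snd.aemeasurable, Measure.map_smul,
      hsnd]
  · exact ae_finsetSum_measure_iff.2 fun i _ => Measure.ae_smul_measure (hR i) _

theorem bind {K L : Type*} [MeasurableSpace K] [MeasurableSpace L] [Countable K] [Countable L]
    [MeasurableSingletonClass K] [MeasurableSingletonClass L] {Q : K → L → Prop} {a : Measure K}
    {b : Measure L} (h : HasCoupling Q a b) {κ : K → Measure X} {η : L → Measure Y}
    (hκη : ∀ k l, Q k l → HasCoupling R (κ k) (η l)) : HasCoupling R (a.bind κ) (b.bind η) := by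
  obtain ⟨π, rfl, rfl, hQ⟩ := h
  choose! θ hθκ hθη hθR using hκη
  refine ⟨π.bind fun p => θ p.1 p.2, ?_, ?_, ?_⟩
  · rw [Measure.fst, measure_map_bind _ _ measurable_fst, Measure.fst,
      measure_bind_map _ measurable_fst]
    exact Measure.bind_congr_right (hQ.mono fun p hp => hθκ _ _ hp)
  · rw [Measure.snd, measure_map_bind _ _ measurable_snd, Measure.snd,
      measure_bind_map _ measurable_snd]
    exact Measure.bind_congr_right (hQ.mono fun p hp => hθη _ _ hp)
  · rw [measure_bind_eq_sum, Measure.ae_sum_iff]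
    intro p
    by_cases hp : π {p} = 0
    · simp [hp]
    · exact Measure.ae_smul_measure (hθR _ _ (ae_iff_of_countable.1 hQ p hp)) _

theorem ne_zero [Countable X] [Countable Y] (h : HasCoupling R μ ν) :
    HasCoupling (fun x y => R x y ∧ μ {x} ≠ 0 ∧ ν {y} ≠ 0) μ ν :=
  h.mono_ae (ae_iff_of_countable.2 fun _ => id) (ae_iff_of_countable.2 fun _ => id)
    fun _ _ hx hy hR => ⟨hR, hx, hy⟩

/-- A point of `B` is kept, any other point is redrawn from the conditioned measure. -/
theorem cond [MeasurableEq X] [IsProbabilityMeasure μ] {B : Set X} (hB : MeasurableSet B)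
    (hμB : μ B ≠ 0) : HasCoupling (fun x y => x ∈ B → x = y) μ μ[|B] := by
  have := cond_isProbabilityMeasure hμB
  have hBf : Measurable (· ∈ B) := measurableSet_setOfPred.1 hB
  have := Measure.isProbabilityMeasure_map (μ := μ) hBf.aemeasurable
  have hbind : (μ.map (· ∈ B)).bind (fun _ => μ[|B]) = μ[|B] := by simp
  rw [← hbind]
  nth_rw 1 [← measure_bind_cond_fiber μ hBf]
  refine (refl _).ne_zero.bind ?_
  rintro k _ ⟨rfl, hk, -⟩
  rw [Measure.map_apply hBf (.singleton k)] at hk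
  have := cond_isProbabilityMeasure hk
  by_cases h : k
  · have hpre : (· ∈ B) ⁻¹' {k} = B := by ext; simp [h]
    rw [hpre]
    exact (refl _).mono fun x y h _ => h
  · refine (of_ae (ae_cond_mem (hBf (.singleton k))) (ae_cond_mem hB)).mono ?_
    rintro x y ⟨rfl, -⟩ hx
    exact (h hx).elim

theorem of_map {K L : Type*} [MeasurableSpace K] [MeasurableSpace L] [Countable K] [Countable L]
    [MeasurableSingletonClass K] [MeasurableSingletonClass L] {R : K → L → Prop}
    [IsProbabilityMeasure μ] [IsProbabilityMeasure ν] {f : X → K} {g : Y → L} (hf : Measurable f)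
    (hg : Measurable g) (h : HasCoupling R (μ.map f) (ν.map g)) :
    HasCoupling (fun x y => R (f x) (g y)) μ ν := by
  rw [← measure_bind_cond_fiber μ hf, ← measure_bind_cond_fiber ν hg]
  refine h.ne_zero.bind fun k l ⟨hR, hk, hl⟩ => ?_
  rw [Measure.map_apply hf (.singleton k)] at hk
  rw [Measure.map_apply hg (.singleton l)] at hl
  have := cond_isProbabilityMeasure hk
  have := cond_isProbabilityMeasure hl
  refine (of_ae (ae_cond_mem (hf (.singleton k))) (ae_cond_mem (hg (.singleton l)))).mono ?_
  rintro x y ⟨rfl, rfl⟩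
  exact hR

section Action

variable {G : Type*} [Group G] [MulAction G X] [MulAction G Y]
  [Countable X] [Countable Y] [MeasurableSingletonClass X] [MeasurableSingletonClass Y]

theorem orbitAverage [Fintype G] (hR : ∀ (g : G) x y, R x y → R (g • x) (g • y)) {x : X} {y : Y}
    (h : R x y) : HasCoupling R (orbitAverage G x) (orbitAverage G y) := by
  refine ⟨(Fintype.card G : ℝ≥0∞)⁻¹ • ∑ g : G, Measure.dirac (g • x, g • y), ?_, ?_,
    Measure.ae_smul_measure ?_ _⟩
  · simp [_root_.orbitAverage, Measure.fst, Measure.map_smul, Measure.map_finset_sum,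
      measurable_fst.aemeasurable]
  · simp [_root_.orbitAverage, Measure.snd, Measure.map_smul, Measure.map_finset_sum,
      measurable_snd.aemeasurable]
  · rw [ae_finsetSum_measure_iff]
    exact fun g _ => (ae_dirac_iff .of_discrete).2 (hR g x y h)

theorem of_smul [Finite G] [SMulInvariantMeasure G X μ] [SMulInvariantMeasure G Y ν]
    (hR : ∀ (g : G) x y, R x y → R (g • x) (g • y))
    (h : HasCoupling (fun x y => ∃ g : G, R x (g • y)) μ ν) : HasCoupling R μ ν := by
  have := Fintype.ofFinite G
  rw [← measure_bind_orbitAverage G μ, ← measure_bind_orbitAverage G ν]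
  refine h.bind fun x y ⟨g, hg⟩ => ?_
  rw [← orbitAverage_smul G g y]
  exact HasCoupling.orbitAverage hR hg

end Action

end HasCoupling
end Coupling
section Quantile

variable {μ ν : Measure ℕ} [IsProbabilityMeasure μ] [IsProbabilityMeasure ν] {t : ℝ} {k : ℕ}

/-- The lower quantile of order `t` of a probability measure on `ℕ`, which pushes the uniform law
on `(0, 1)` forward to that measure. For `t ≥ 1` the infimum may be over the empty set. -/
noncomputable def natQuantile (μ : Measure ℕ) (t : ℝ) : ℕ := sInf {k | t ≤ μ.real (Iic k)}

theorem natQuantile_le_iff (ht : t < 1) : natQuantile μ t ≤ k ↔ t ≤ μ.real (Iic k) := by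
  have hlim : Filter.Tendsto (fun k : ℕ => μ.real (Iic k)) .atTop (nhds 1) := by
    have h := tendsto_measure_iUnion_atTop (μ := μ) (monotone_Iic (α := ℕ))
    rw [iUnion_Iic, measure_univ] at h
    exact (ENNReal.tendsto_toReal ENNReal.one_ne_top).comp h
  have hne : {k | t ≤ μ.real (Iic k)}.Nonempty :=
    ((hlim.eventually (lt_mem_nhds ht)).mono fun _ => le_of_lt).exists
  exact ⟨fun h => (Nat.sInf_mem hne).trans (measureReal_mono (Iic_subset_Iic.2 h)),
    fun h => Nat.sInf_le h⟩

variable (μ) in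
theorem aemeasurable_natQuantile : AEMeasurable (natQuantile μ) (volume.restrict (Ioo 0 1)) :=
  aemeasurable_restrict_of_monotoneOn measurableSet_Ioo fun _ hs _ ht hst =>
    (natQuantile_le_iff hs.2).2 (hst.trans ((natQuantile_le_iff ht.2).1 le_rfl))

variable (μ) in
theorem volume_restrict_Ioo_map_natQuantile :
    (volume.restrict (Ioo 0 1)).map (natQuantile μ) = μ := by
  refine Measure.ext_of_Iic _ _ fun k => ?_
  have hpre : natQuantile μ ⁻¹' Iic k ∩ Ioo 0 1 = Iic (μ.real (Iic k)) ∩ Ioo 0 1 := by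
    ext t
    exact and_congr_left fun ht => natQuantile_le_iff ht.2
  have hIoc : Iic (μ.real (Iic k)) ∩ Ioc 0 1 = Ioc 0 (μ.real (Iic k)) := by
    rw [inter_comm, Ioc_inter_Iic, min_eq_right measureReal_le_one]
  rw [Measure.map_apply_of_aemeasurable (aemeasurable_natQuantile μ) measurableSet_Iic,
    Measure.restrict_apply' measurableSet_Ioo, hpre,
    measure_congr (Filter.EventuallyEq.rfl.inter Ioo_ae_eq_Ioc), hIoc, Real.volume_Ioc, sub_zero,
    ofReal_measureReal]

theorem hasCoupling_of_measureReal_Iic_le (hμν : ∀ k, μ.real (Iic k) ≤ ν.real (Iic (k + 1)))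
    (hνμ : ∀ k, ν.real (Iic k) ≤ μ.real (Iic (k + 1))) :
    HasCoupling (fun i j => i ≤ j + 1 ∧ j ≤ i + 1) μ ν := by
  have hμ := aemeasurable_natQuantile μ
  have hν := aemeasurable_natQuantile ν
  refine ⟨(volume.restrict (Ioo 0 1)).map fun t => (natQuantile μ t, natQuantile ν t),
    ?_, ?_, ?_⟩
  · rw [Measure.fst_map_prodMk₀ hν, volume_restrict_Ioo_map_natQuantile]
  · rw [Measure.snd_map_prodMk₀ hμ, volume_restrict_Ioo_map_natQuantile]
  · refine (ae_map_iff (hμ.prodMk hν) .of_discrete).2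
      ((ae_restrict_iff' measurableSet_Ioo).2 (ae_of_all _ fun t ht => ⟨?_, ?_⟩))
    · exact (natQuantile_le_iff ht.2).2 (((natQuantile_le_iff ht.2).1 le_rfl).trans (hνμ _))
    · exact (natQuantile_le_iff ht.2).2 (((natQuantile_le_iff ht.2).1 le_rfl).trans (hμν _))

end Quantile

section LogConcave

variable {R : Type*}

/-- Log-concavity of a sequence, in the form that excludes internal zeros: the ratios of
consecutive terms are nonincreasing, with the denominators cleared. -/
def LogConcaveSeq [Mul R] [LE R] (x : ℕ → R) : Prop :=
  ∀ ⦃i j⦄, i ≤ j → x i * x (j + 1) ≤ x (i + 1) * x j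

namespace LogConcaveSeq

theorem mul_add_le [CommMagma R] [Preorder R] {x : ℕ → R} (hx : LogConcaveSeq x) {i j : ℕ}
    (hij : i ≤ j) (r : ℕ) : x i * x (j + r) ≤ x (i + r) * x j := by
  induction r generalizing i with
  | zero => rfl
  | succ r ih =>
    rcases hij.eq_or_lt with rfl | hlt
    · rw [mul_comm]
    · calc x i * x (j + (r + 1)) ≤ x (i + 1) * x (j + r) := hx (hij.trans (j.le_add_right r))
        _ ≤ x (i + 1 + r) * x j := ih hlt
        _ = x (i + (r + 1)) * x j := by rw [add_right_comm, add_assoc]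

theorem mul [CommSemigroup R] [Preorder R] [MulLeftMono R] {x y : ℕ → R} (hx : LogConcaveSeq x)
    (hy : LogConcaveSeq y) : LogConcaveSeq fun k => x k * y k := by
  intro i j hij
  dsimp only
  rw [mul_mul_mul_comm, mul_mul_mul_comm (x (i + 1))]
  exact mul_le_mul' (hx hij) (hy hij)

theorem reflect [CommSemiring R] [PartialOrder R] [CanonicallyOrderedAdd R] {x : ℕ → R}
    (hx : LogConcaveSeq x) (s : ℕ) : LogConcaveSeq fun k => if k ≤ s then x (s - k) else 0 := by
  intro i j hij
  by_cases hj : j + 1 ≤ s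
  · obtain ⟨p, rfl⟩ := Nat.exists_eq_add_of_le hj
    obtain ⟨r, rfl⟩ := Nat.exists_eq_add_of_le hij
    have h := hx (Nat.le_add_right p r)
    have hi : i + r + 1 + p - i = p + r + 1 := by omega
    have hi' : i + r + 1 + p - (i + 1) = p + r := by omega
    have hj' : i + r + 1 + p - (i + r) = p + 1 := by omega
    simp only [show i ≤ i + r + 1 + p by omega, show i + 1 ≤ i + r + 1 + p by omega,
      show i + r ≤ i + r + 1 + p by omega, hj, if_true, hi, hi', hj', Nat.add_sub_cancel_left]
    rw [mul_comm, mul_comm (x (p + r))]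
    exact h
  · simp [hj]

end LogConcaveSeq

theorem logConcaveSeq_choose (n : ℕ) : LogConcaveSeq n.choose := by
  intro i j hij
  have hweights : (i + 1) * (n - j) ≤ (j + 1) * (n - i) := by gcongr
  refine Nat.le_of_mul_le_mul_left ?_ (Nat.mul_pos i.succ_pos j.succ_pos)
  calc (i + 1) * (j + 1) * (n.choose i * n.choose (j + 1))
      = (i + 1) * n.choose i * (n.choose (j + 1) * (j + 1)) := by ring
    _ = n.choose i * n.choose j * ((i + 1) * (n - j)) := by
      rw [Nat.choose_succ_right_eq]; ring
    _ ≤ n.choose i * n.choose j * ((j + 1) * (n - i)) := by gcongr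
    _ = n.choose i * (n - i) * n.choose j * (j + 1) := by ring
    _ = (i + 1) * (j + 1) * (n.choose (i + 1) * n.choose j) := by
      rw [← Nat.choose_succ_right_eq]; ring

end LogConcave

section LogConcaveLaw

theorem mul_measure_le_of_injOn {X : Type*} [Countable X] [MeasurableSpace X]
    [MeasurableSingletonClass X] (μ : Measure X) [IsProbabilityMeasure μ] {I : Set X} {φ : X → X}
    (hφ : InjOn φ I) {a b : ℝ≥0∞} (h : ∀ i ∈ I, a * μ {i} ≤ b * μ {φ i}) : a * μ I ≤ b :=
  calc a * μ I = ∑' i : I, a * μ {(i : X)} := by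
        rw [ENNReal.tsum_mul_left, ← measure_biUnion I.to_countable
          (fun i _ j _ => disjoint_singleton.2) fun i _ => .singleton i, biUnion_of_singleton]
    _ ≤ ∑' i : I, b * μ {φ i} := ENNReal.tsum_le_tsum fun i => h i i.2
    _ = b * μ (⋃ i ∈ I, {φ i}) := by
        rw [ENNReal.tsum_mul_left, measure_biUnion I.to_countable
          (fun i hi j hj hij => disjoint_singleton.2 (hφ.ne hi hj hij)) fun i _ => .singleton _]
    _ ≤ b := mul_le_of_le_one_right' prob_le_one

section Cond

variable {X : Type*} [MeasurableSpace X] [MeasurableSingletonClass X] {μ : Measure X}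
  [IsProbabilityMeasure μ] {d k : X} {B : Set X}

theorem measureReal_compl_singleton_mul_cond (hdB : d ∉ B) :
    (1 - μ.real {d}) * μ[|{d}ᶜ].real B = μ.real B := by
  have hsub : {d}ᶜ ∩ B = B := inter_eq_right.2 (subset_compl_singleton_iff.2 hdB)
  rw [← probReal_compl_eq_one_sub (.singleton d), mul_comm]
  simp only [measureReal_def, ← ENNReal.toReal_mul]
  rw [cond_mul_eq_inter (MeasurableSet.singleton d).compl, hsub]

theorem measureReal_le_cond_compl_singleton (hdB : d ∉ B) : μ.real B ≤ μ[|{d}ᶜ].real B := by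
  rw [← measureReal_compl_singleton_mul_cond hdB]
  exact mul_le_of_le_one_left measureReal_nonneg (sub_le_self _ measureReal_nonneg)

theorem measureReal_cond_compl_singleton_le (hB : MeasurableSet B) (hdB : d ∉ B) (hkB : k ∉ B)
    (hd : μ {d}ᶜ ≠ 0) (h : μ {d} * μ (insert k B) ≤ μ {k}) :
    μ[|{d}ᶜ].real B ≤ μ.real (insert k B) := by
  have hpos : 0 < 1 - μ.real {d} := by
    rw [← probReal_compl_eq_one_sub (.singleton d)]
    exact ENNReal.toReal_pos hd (measure_ne_top _ _)
  have hreal : μ.real {d} * μ.real (insert k B) ≤ μ.real {k} := by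
    simpa [measureReal_def] using ENNReal.toReal_mono (measure_ne_top _ _) h
  have hinsert : μ.real (insert k B) = μ.real {k} + μ.real B :=
    measureReal_union (disjoint_singleton_left.2 hkB) hB
  refine le_of_mul_le_mul_left ?_ hpos
  rw [measureReal_compl_singleton_mul_cond hdB]
  linarith

end Cond

variable {μ : Measure ℕ} [IsProbabilityMeasure μ] {d k : ℕ}

theorem LogConcaveSeq.measure_singleton_mul_measure_Iic_le (hμ : LogConcaveSeq fun k => μ {k})
    (hkd : k ≤ d) : μ {d} * μ (Iic k) ≤ μ {k} := by
  refine mul_measure_le_of_injOn μ (add_left_injective (d - k)).injOn fun i hi => ?_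
  have h := hμ.mul_add_le (mem_Iic.1 hi) (d - k)
  rwa [Nat.add_sub_cancel' hkd, mul_comm, mul_comm (μ {i + _})] at h

theorem LogConcaveSeq.measure_singleton_mul_measure_Ici_le (hμ : LogConcaveSeq fun k => μ {k})
    (hdk : d ≤ k) : μ {d} * μ (Ici k) ≤ μ {k} := by
  have hinj : InjOn (fun i => i - (k - d)) (Ici k) := fun i hi j hj hij => by
    simp only [mem_Ici] at hi hj
    dsimp only at hij
    omega
  refine mul_measure_le_of_injOn μ hinj fun i hi => ?_
  have h := hμ.mul_add_le hdk (i - k)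
  rw [mem_Ici] at hi
  rwa [Nat.add_sub_cancel' hi, mul_comm (μ {d + _}), show d + (i - k) = i - (k - d) by omega] at h

theorem LogConcaveSeq.hasCoupling_cond_compl_singleton (hμ : LogConcaveSeq fun k => μ {k})
    (hd : μ {d}ᶜ ≠ 0) : HasCoupling (fun i j => i ≤ j + 1 ∧ j ≤ i + 1) μ μ[|{d}ᶜ] := by
  have := cond_isProbabilityMeasure hd
  have hIic (ρ : Measure ℕ) [IsProbabilityMeasure ρ] (k : ℕ) :
      ρ.real (Iic k) = 1 - ρ.real (Ioi k) := by
    rw [← compl_Ioi, probReal_compl_eq_one_sub measurableSet_Ioi]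
  refine hasCoupling_of_measureReal_Iic_le (fun k => ?_) fun k => ?_
  · rcases lt_or_ge (k + 1) d with hk | hk
    · exact (measureReal_mono (Iic_subset_Iic.2 k.le_succ)).trans
        (measureReal_le_cond_compl_singleton (notMem_Iic.2 hk))
    · have hIci : insert (k + 1) (Ioi (k + 1)) = Ioi k := Ioi_insert.trans (Order.Ici_succ k)
      have h := measureReal_cond_compl_singleton_le measurableSet_Ioi (notMem_Ioi.2 hk)
        self_notMem_Ioi hd (by rw [Ioi_insert]; exact hμ.measure_singleton_mul_measure_Ici_le hk)
      rw [hIci] at h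
      rw [hIic, hIic]
      exact sub_le_sub_left h 1
  · rcases lt_or_ge k d with hk | hk
    · have hinsert : insert (k + 1) (Iic k) = Iic (k + 1) := (Order.Iic_succ k).symm
      have h := measureReal_cond_compl_singleton_le measurableSet_Iic (notMem_Iic.2 hk)
        (notMem_Iic.2 k.lt_succ_self) hd
        (by rw [hinsert]; exact hμ.measure_singleton_mul_measure_Iic_le hk)
      rwa [hinsert] at h
    · rw [hIic, hIic]
      exact sub_le_sub_left ((measureReal_mono (Ioi_subset_Ioi k.le_succ)).trans
        (measureReal_le_cond_compl_singleton (notMem_Ioi.2 hk))) 1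

end LogConcaveLaw

section Stabilizer

variable {β : Type*} [DecidableEq β] {A T T' : Finset β}

open MulAction

theorem smul_subset_smul_union_iff (g : stabilizer (Equiv.Perm β) A) :
    g • T' ⊆ g • T ∪ A ↔ T' ⊆ T ∪ A := by
  have hA : g • (T ∪ A) = g • T ∪ A :=
    Finset.smul_finset_union.trans (congrArg (g • T ∪ ·) g.2)
  rw [← hA, Finset.smul_finset_subset_smul_finset_iff]

theorem card_smul_inter (g : stabilizer (Equiv.Perm β) A) (T : Finset β) :
    #(g • T ∩ A) = #(T ∩ A) := by
  have hA : g • (T ∩ A) = g • T ∩ A :=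
    Finset.smul_finset_inter.trans (congrArg (g • T ∩ ·) g.2)
  rw [← hA, Finset.card_smul_finset]

theorem exists_smul_eq_of_card_inter_eq [Finite β] (hT : #T = #T') (hA : #(T ∩ A) = #(T' ∩ A)) :
    ∃ g : stabilizer (Equiv.Perm β) A, g • T = T' := by
  have := Fintype.ofFinite β
  have hfiber (c : Bool × Bool) :
      Fintype.card {x // (decide (x ∈ A), decide (x ∈ T)) = c} =
        Fintype.card {x // (decide (x ∈ A), decide (x ∈ T')) = c} := by
    have hsplit (U V : Finset β) : #(V ∩ U) + #(Vᶜ ∩ U) = #U := by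
      rw [Finset.inter_comm V, Finset.inter_comm Vᶜ, ← Finset.sdiff_eq_inter_compl,
        Finset.card_inter_add_card_sdiff]
    have hfilter (T : Finset β) :
        Finset.univ.filter (fun x => (decide (x ∈ A), decide (x ∈ T)) = c) =
          (bif c.1 then A else Aᶜ) ∩ bif c.2 then T else Tᶜ := by
      ext x
      rcases c with ⟨_ | _, _ | _⟩ <;> simp
    have hsplitT := hsplit T A
    have hsplitT' := hsplit T' A
    have hsplitA := hsplit A T
    have hsplitA' := hsplit A T'
    have hsplitAc := hsplit Aᶜ T
    have hsplitAc' := hsplit Aᶜ T'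
    rw [Fintype.card_subtype, Fintype.card_subtype, hfilter, hfilter]
    rcases c with ⟨_ | _, _ | _⟩ <;>
      simp only [cond_true, cond_false, Finset.inter_comm _ A, Finset.inter_comm _ Aᶜ] at * <;>
      omega
  let e : Equiv.Perm β := Equiv.ofFiberEquiv fun c => Fintype.equivOfCardEq (hfiber c)
  have he (x : β) : (e x ∈ A ↔ x ∈ A) ∧ (e x ∈ T' ↔ x ∈ T) := by
    have h := Equiv.ofFiberEquiv_map (fun c => Fintype.equivOfCardEq (hfiber c)) x
    rwa [Prod.mk.injEq, decide_eq_decide, decide_eq_decide] at h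
  have hsmul {U V : Finset β} (hUV : ∀ x, e x ∈ V ↔ x ∈ U) : e • U = V := by
    ext y
    rw [← Finset.inv_smul_mem_iff, ← hUV, ← Equiv.Perm.smul_def, smul_inv_smul]
  exact ⟨⟨e, hsmul fun x => (he x).1⟩, hsmul fun x => (he x).2⟩

theorem exists_smul_subset_union [Finite β] (hT : #T = #T') (hA : #(T ∩ A) ≤ #(T' ∩ A)) :
    ∃ g : stabilizer (Equiv.Perm β) A, g • T' ⊆ T ∪ A ∧ T ∩ A ⊆ g • T' := by
  have hsdiff : #(T' \ A) ≤ #(T \ A) := by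
    have h := Finset.card_inter_add_card_sdiff T A
    have h' := Finset.card_inter_add_card_sdiff T' A
    omega
  obtain ⟨V, hTV, hVA, hV⟩ := Finset.exists_subsuperset_card_eq
    (Finset.inter_subset_right (s₁ := T) (s₂ := A)) hA
    (Finset.card_le_card Finset.inter_subset_right)
  obtain ⟨W, hWT, hW⟩ := Finset.exists_subset_card_eq hsdiff
  have hVW : Disjoint V W := Finset.disjoint_of_subset_left hVA
    (Finset.disjoint_of_subset_right hWT Finset.disjoint_sdiff)
  have hinter : (V ∪ W) ∩ A = V := by grind
  have hcard : #T' = #(V ∪ W) := by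
    rw [Finset.card_union_of_disjoint hVW, hV, hW, Finset.card_inter_add_card_sdiff]
  obtain ⟨g, hg⟩ := exists_smul_eq_of_card_inter_eq hcard (by rw [hinter, hV])
  exact ⟨g, by grind, hg ▸ hTV.trans Finset.subset_union_left⟩

theorem card_symmDiff_add_of_subset_union (hT : #T = #T') (hsub : T' ⊆ T ∪ A) (hsup : T ∩ A ⊆ T') :
    #(T ∆ T') + 2 * #(T ∩ A) = 2 * #(T' ∩ A) := by
  have hsymm : #(T ∆ T') = #(T \ T') + #(T' \ T) :=
    Finset.card_union_of_disjoint disjoint_sdiff_sdiff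
  have hsdiff : T' \ T = (T' ∩ A) \ (T ∩ A) := by grind
  have hle : T ∩ A ⊆ T' ∩ A := Finset.subset_inter hsup Finset.inter_subset_right
  have h := Finset.card_sdiff_add_card_eq_card hle
  have h' := (Finset.card_sdiff_comm hT).trans (congrArg _ hsdiff)
  rw [hsymm, h', hsdiff]
  omega

theorem exists_card_symmDiff_smul_le [Finite β] {r : ℕ} (hT : #T = #T')
    (h : #(T ∩ A) ≤ #(T' ∩ A) + r) (h' : #(T' ∩ A) ≤ #(T ∩ A) + r) :
    ∃ g : stabilizer (Equiv.Perm β) A, #(T ∆ (g • T')) ≤ 2 * r := by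
  wlog hle : #(T ∩ A) ≤ #(T' ∩ A) generalizing T T'
  · obtain ⟨g, hg⟩ := this hT.symm h' h (Nat.le_of_not_ge hle)
    refine ⟨g⁻¹, ?_⟩
    rwa [← Finset.card_smul_finset g, Finset.smul_finset_symmDiff, smul_inv_smul, symmDiff_comm]
  obtain ⟨g, hsub, hsup⟩ := exists_smul_subset_union hT hle
  have hcard := card_symmDiff_add_of_subset_union
    (hT.trans (Finset.card_smul_finset g T').symm) hsub hsup
  rw [card_smul_inter] at hcard
  exact ⟨g, by omega⟩

end Stabilizer

section Invariance

variable {G X : Type*} [Group G] [MeasurableSpace X] [MulAction G X]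

theorem smulInvariantMeasure_count [MeasurableConstSMul G X] :
    SMulInvariantMeasure G X (Measure.count : Measure X) where
  measure_preimage_smul g B hB := by
    rw [Measure.count_apply hB, Measure.count_apply (measurable_const_smul g hB), preimage_smul,
      encard_smul_set]

theorem smulInvariantMeasure_cond (μ : Measure X) [SMulInvariantMeasure G X μ] {B : Set X}
    (hB : MeasurableSet B) (hGB : ∀ (g : G) x, g • x ∈ B ↔ x ∈ B) :
    SMulInvariantMeasure G X μ[|B] where
  measure_preimage_smul g E hE := by
    have hinter : B ∩ (g • ·) ⁻¹' E = (g • ·) ⁻¹' (B ∩ E) := by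
      ext x
      exact and_congr_left fun _ => (hGB g x).symm
    rw [cond_apply hB, cond_apply hB, hinter,
      SMulInvariantMeasure.measure_preimage_smul g (hB.inter hE)]

end Invariance

theorem map_cond_preimage {X K : Type*} [MeasurableSpace X] [MeasurableSpace K] (μ : Measure X)
    {f : X → K} (hf : Measurable f) {B : Set K} (hB : MeasurableSet B) :
    μ[|f ⁻¹' B].map f = (μ.map f)[|B] := by
  ext E hE
  rw [Measure.map_apply hf hE, cond_apply (hf hB), cond_apply hB, Measure.map_apply hf hB,
    Measure.map_apply hf (hB.inter hE), preimage_inter]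

theorem ae_cond_of_ae {X : Type*} [MeasurableSpace X] {μ : Measure X} {B : Set X} {p : X → Prop}
    (h : ∀ᵐ x ∂μ, p x) : ∀ᵐ x ∂μ[|B], p x :=
  cond_absolutelyContinuous.ae_le h

theorem card_filter_card_inter_eq {β : Type*} [Fintype β] [DecidableEq β] (A : Finset β) (s k : ℕ) :
    #{T : Finset β | #T = s ∧ #(T ∩ A) = k} =
      (#A).choose k * if k ≤ s then (#Aᶜ).choose (s - k) else 0 := by
  split_ifs with hk
  · have hunion {V W : Finset β} (hV : V ⊆ A) (hW : W ⊆ Aᶜ) :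
        (V ∪ W) ∩ A = V ∧ (V ∪ W) ∩ Aᶜ = W := by
      constructor <;> grind [Finset.mem_compl]
    rw [← Finset.card_powersetCard, ← Finset.card_powersetCard, ← Finset.card_product]
    refine Finset.card_nbij' (fun T => (T ∩ A, T ∩ Aᶜ)) (fun p => p.1 ∪ p.2) ?_ ?_ ?_ ?_
    · intro T hT
      have hcard := Finset.card_inter_add_card_sdiff T A
      rw [Finset.sdiff_eq_inter_compl] at hcard
      simp only [Finset.coe_filter, Finset.mem_univ, true_and, mem_ofPred_eq] at hT
      simp only [Finset.coe_product, mem_prod, Finset.mem_coe, Finset.mem_powersetCard,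
        Finset.inter_subset_right, true_and]
      omega
    · rintro ⟨V, W⟩ hVW
      simp only [Finset.coe_product, mem_prod, Finset.mem_coe, Finset.mem_powersetCard] at hVW
      obtain ⟨⟨hVA, hV⟩, hWA, hW⟩ := hVW
      simp [(hunion hVA hWA).1, Finset.card_union_of_disjoint (disjoint_compl_right.mono hVA hWA),
        hV, hW, hk]
    · intro T _
      simp [← Finset.inter_union_distrib_left]
    · rintro ⟨V, W⟩ hVW
      simp only [Finset.coe_product, mem_prod, Finset.mem_coe, Finset.mem_powersetCard] at hVW
      exact Prod.ext_iff.2 (hunion hVW.1.1 hVW.2.1)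
  · rw [mul_zero, Finset.card_eq_zero, Finset.filter_eq_empty_iff]
    rintro T - ⟨rfl, rfl⟩
    exact hk (Finset.card_le_card Finset.inter_subset_left)

section Sample

variable {β : Type*} {s : ℕ}

/-- The law of a sample of `s` distinct elements of `β` drawn uniformly without replacement.
It is the zero measure if `β` is finite with fewer than `s` elements. -/
noncomputable def sampleLaw (β : Type*) (s : ℕ) : Measure (Finset β) := uniformOn {T | #T = s}

theorem sampleLaw_apply [Fintype β] (p : Finset β → Prop) [DecidablePred p] :
    sampleLaw β s {T | p T} = #{T | #T = s ∧ p T} / (Fintype.card β).choose s := by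
  classical
  have hs : {T : Finset β | #T = s} =
      ((Finset.univ : Finset β).powersetCard s : Set (Finset β)) := by
    ext
    simp
  have hp : {T | p T} = (Finset.univ.filter p : Set (Finset β)) := by simp
  rw [sampleLaw, hs, hp, uniformOn_apply_finset, Finset.card_powersetCard, Finset.card_univ]
  congr 4
  ext
  simp

variable [Finite β]

theorem isProbabilityMeasure_sampleLaw (hs : s ≤ Nat.card β) :
    IsProbabilityMeasure (sampleLaw β s) := by
  have := Fintype.ofFinite β
  obtain ⟨T, -, hT⟩ := Finset.exists_subset_card_eq (s := (Finset.univ : Finset β)) (n := s)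
    (by rwa [Finset.card_univ, ← Nat.card_eq_fintype_card])
  exact isProbabilityMeasure_uniformOn (toFinite _) ⟨T, hT⟩

variable (β s) in
theorem ae_sampleLaw_card_eq : ∀ᵐ T ∂sampleLaw β s, #T = s :=
  ae_cond_mem (μ := Measure.count) .of_discrete

variable [DecidableEq β] {A : Finset β}

instance smulInvariantMeasure_stabilizer_sampleLaw :
    SMulInvariantMeasure (MulAction.stabilizer (Equiv.Perm β) A) (Finset β) (sampleLaw β s) :=
  have : MeasurableConstSMul (MulAction.stabilizer (Equiv.Perm β) A) (Finset β) :=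
    ⟨fun _ => .of_discrete⟩
  have := smulInvariantMeasure_count (G := MulAction.stabilizer (Equiv.Perm β) A) (X := Finset β)
  smulInvariantMeasure_cond _ .of_discrete fun g T => by
    simp only [mem_ofPred_eq, Finset.card_smul_finset]

theorem smulInvariantMeasure_stabilizer_sampleLaw_cond (p : ℕ → Prop) :
    SMulInvariantMeasure (MulAction.stabilizer (Equiv.Perm β) A) (Finset β)
      (sampleLaw β s)[|{T | p #(T ∩ A)}] :=
  smulInvariantMeasure_cond _ .of_discrete fun g T => by
    simp only [mem_ofPred_eq, card_smul_inter]

theorem logConcaveSeq_sampleLaw_map_card_inter :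
    LogConcaveSeq fun k => (sampleLaw β s).map (fun T => #(T ∩ A)) {k} := by
  have := Fintype.ofFinite β
  have hlaw (k : ℕ) : (sampleLaw β s).map (fun T => #(T ∩ A)) {k} =
      ((#A).choose k * if k ≤ s then (#Aᶜ).choose (s - k) else 0 : ℕ) *
        ((Fintype.card β).choose s : ℝ≥0∞)⁻¹ := by
    rw [Measure.map_apply .of_discrete .of_discrete, ← card_filter_card_inter_eq, ← div_eq_mul_inv]
    exact sampleLaw_apply _
  have hnat : LogConcaveSeq fun k => (#A).choose k * if k ≤ s then (#Aᶜ).choose (s - k) else 0 :=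
    (logConcaveSeq_choose _).mul ((logConcaveSeq_choose _).reflect s)
  simp_rw [hlaw]
  exact LogConcaveSeq.mul (fun i j hij => by exact_mod_cast hnat hij) fun _ _ _ => le_rfl

theorem hasCoupling_sampleLaw_cond_of_monotone (hs : s ≤ Nat.card β) {p : ℕ → Prop}
    (hp : Monotone p) (hβp : sampleLaw β s {T | p #(T ∩ A)} ≠ 0) :
    HasCoupling (fun T T' => T' ⊆ T ∪ A) (sampleLaw β s) (sampleLaw β s)[|{T | p #(T ∩ A)}] := by
  have := isProbabilityMeasure_sampleLaw hs
  have := smulInvariantMeasure_stabilizer_sampleLaw_cond (A := A) (s := s) p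
  refine .of_smul (G := MulAction.stabilizer (Equiv.Perm β) A)
    (fun g T T' => (smul_subset_smul_union_iff g).2) ?_
  have hcard := ae_sampleLaw_card_eq β s
  refine (HasCoupling.cond .of_discrete hβp).mono_ae hcard
    ((ae_cond_of_ae hcard).and (ae_cond_mem .of_discrete)) ?_
  rintro T T' hT ⟨hT', hpT'⟩ hkeep
  by_cases hpT : p #(T ∩ A)
  · exact ⟨1, by rw [one_smul, hkeep hpT]; exact Finset.subset_union_left⟩
  · obtain ⟨g, hg, -⟩ := exists_smul_subset_union (hT.trans hT'.symm)
      (le_of_not_ge fun h => hpT (hp h hpT'))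
    exact ⟨g, hg⟩

theorem hasCoupling_sampleLaw_cond_ne (hs : s ≤ Nat.card β) (d : ℕ)
    (hd : sampleLaw β s {T | #(T ∩ A) ≠ d} ≠ 0) :
    HasCoupling (fun T T' => #(T ∆ T') ≤ 2) (sampleLaw β s)
      (sampleLaw β s)[|{T | #(T ∩ A) ≠ d}] := by
  have := isProbabilityMeasure_sampleLaw hs
  have := cond_isProbabilityMeasure hd
  have := smulInvariantMeasure_stabilizer_sampleLaw_cond (A := A) (s := s) (· ≠ d)
  have hA : Measurable fun T => #(T ∩ A) := .of_discrete
  have := Measure.isProbabilityMeasure_map (μ := sampleLaw β s) hA.aemeasurable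
  refine .of_smul (G := MulAction.stabilizer (Equiv.Perm β) A) (fun g T T' h => ?_) ?_
  · rwa [← Finset.smul_finset_symmDiff, Finset.card_smul_finset]
  have hcard := ae_sampleLaw_card_eq β s
  have hmap : HasCoupling _ _ ((sampleLaw β s)[|{T | #(T ∩ A) ≠ d}].map fun T => #(T ∩ A)) :=
    map_cond_preimage (sampleLaw β s) hA (.of_discrete (s := {d}ᶜ)) ▸
      logConcaveSeq_sampleLaw_map_card_inter.hasCoupling_cond_compl_singleton
    (d := d) (by rwa [Measure.map_apply hA .of_discrete])
  refine (hmap.of_map hA hA).mono_ae hcard (ae_cond_of_ae hcard) ?_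
  rintro T T' hT hT' ⟨h, h'⟩
  exact exists_card_symmDiff_smul_le (hT.trans hT'.symm) h h'

end Sample

section SizeBias

variable {X ι : Type*} [MeasurableSpace X] [Fintype ι] {μ : Measure X}

theorem sum_mul_ite_le_add {w : ι → ℝ} {W : ℝ} (hw : ∀ i, 0 ≤ w i) (hW : ∀ i, w i ≤ W)
    {p q : ι → Prop} [DecidablePred p] [DecidablePred q] (t : Finset ι)
    (hqp : ∀ i ∉ t, q i → p i) :
    ∑ i, w i * (if q i then (1 : ℝ) else 0) ≤
      ∑ i, w i * (if p i then (1 : ℝ) else 0) + #t * W := by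
  classical
  calc ∑ i, w i * (if q i then (1 : ℝ) else 0)
      ≤ ∑ i, (w i * (if p i then (1 : ℝ) else 0) + if i ∈ t then W else 0) := by
        refine Finset.sum_le_sum fun i _ => ?_
        have := hw i
        have := hW i
        have := hqp i
        split_ifs <;> grind
    _ = ∑ i, w i * (if p i then (1 : ℝ) else 0) + #t * W := by
        rw [Finset.sum_add_distrib, Finset.sum_ite_mem, Finset.univ_inter, Finset.sum_const,
          nsmul_eq_mul]

theorem existsBoundedSizeBiasCoupling_map {ν : Measure X} [IsProbabilityMeasure μ] {Y : X → ℝ}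
    (hY : Measurable Y) {c : ℝ} (h : HasCoupling (fun x y => Y y ≤ Y x + c) μ ν)
    (hν : ∀ f : ℝ → ℝ, Measurable f → (∃ C : ℝ, ∀ x, |f x| ≤ C) →
      ∫ x, Y x * f (Y x) ∂μ = (∫ x, Y x ∂μ) * ∫ x, f (Y x) ∂ν) :
    ExistsBoundedSizeBiasCoupling (μ.map Y) c := by
  obtain ⟨π, hfst, hsnd, hπ⟩ := h
  have hYY : Measurable (Prod.map Y Y) := hY.prodMap hY
  have : IsProbabilityMeasure π := ⟨by rw [← Measure.fst_univ, hfst, measure_univ]⟩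
  have hmapfst : (π.map (Prod.map Y Y)).map Prod.fst = μ.map Y := by
    rw [Measure.map_map measurable_fst hYY, ← hfst, Measure.fst, Measure.map_map hY measurable_fst]
    rfl
  have hmapsnd : (π.map (Prod.map Y Y)).map Prod.snd = ν.map Y := by
    rw [Measure.map_map measurable_snd hYY, ← hsnd, Measure.snd, Measure.map_map hY measurable_snd]
    rfl
  have hintfst (g : ℝ → ℝ) (hg : Measurable g) :
      ∫ q, g q.1 ∂π.map (Prod.map Y Y) = ∫ x, g (Y x) ∂μ := by
    rw [← integral_map_of_stronglyMeasurable measurable_fst hg.stronglyMeasurable, hmapfst,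
      integral_map_of_stronglyMeasurable hY hg.stronglyMeasurable]
  have hintsnd (g : ℝ → ℝ) (hg : Measurable g) :
      ∫ q, g q.2 ∂π.map (Prod.map Y Y) = ∫ x, g (Y x) ∂ν := by
    rw [← integral_map_of_stronglyMeasurable measurable_snd hg.stronglyMeasurable, hmapsnd,
      integral_map_of_stronglyMeasurable hY hg.stronglyMeasurable]
  refine ⟨π.map (Prod.map Y Y), Measure.isProbabilityMeasure_map hYY.aemeasurable, hmapfst,
    fun f hf hbdd => ?_, ?_⟩
  · rw [hintfst (fun y => y * f y) (measurable_id.mul hf), hintfst (fun y => y) measurable_id,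
      hintsnd f hf]
    exact hν f hf hbdd
  · exact (ae_map_iff hYY.aemeasurable
      (measurableSet_le measurable_snd (measurable_fst.add_const c))).2 hπ

theorem measureReal_mul_integral_cond (μ : Measure X) [IsFiniteMeasure μ] (B : Set X) (g : X → ℝ) :
    μ.real B * ∫ x, g x ∂μ[|B] = ∫ x in B, g x ∂μ := by
  by_cases hB : μ B = 0
  · rw [Measure.restrict_eq_zero.2 hB, measureReal_def, hB, ENNReal.toReal_zero, zero_mul,
      integral_zero_measure]
  · rw [ProbabilityTheory.cond, integral_smul_measure, smul_eq_mul, ENNReal.toReal_inv,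
      ← measureReal_def, mul_inv_cancel_left₀ ((measureReal_ne_zero_iff).2 hB)]

theorem integral_sum_mul_ite_mul [IsFiniteMeasure μ] {w : ι → ℝ} {p : ι → X → Prop}
    [∀ i, DecidablePred (p i)] (hp : ∀ i, MeasurableSet {x | p i x}) {g : X → ℝ}
    (hg : Integrable g μ) :
    ∫ x, (∑ i, w i * if p i x then (1 : ℝ) else 0) * g x ∂μ =
      ∑ i, w i * μ.real {x | p i x} * ∫ x, g x ∂μ[|{x | p i x}] := by
  have hind (i : ι) (x : X) : (w i * if p i x then (1 : ℝ) else 0) * g x =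
      w i * {x | p i x}.indicator g x := by
    simp only [indicator_apply, mem_ofPred_eq, mul_ite, mul_one, mul_zero, ite_mul, zero_mul]
  simp_rw [Finset.sum_mul, hind]
  rw [integral_finsetSum _ fun i _ => (hg.indicator (hp i)).const_mul _]
  refine Finset.sum_congr rfl fun i _ => ?_
  rw [integral_const_mul, integral_indicator (hp i), ← measureReal_mul_integral_cond, mul_assoc]

theorem existsBoundedSizeBiasCoupling_map_sum_mul_ite [Nonempty ι] [IsProbabilityMeasure μ]
    {w : ι → ℝ} (hw : ∀ i, 0 < w i) {p : ι → X → Prop} [∀ i, DecidablePred (p i)]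
    (hp : ∀ i, MeasurableSet {x | p i x}) (hμp : ∀ i, μ {x | p i x} ≠ 0) {c : ℝ}
    (h : ∀ i, HasCoupling (fun x y => ∑ i, w i * (if p i y then (1 : ℝ) else 0) ≤
      ∑ i, w i * (if p i x then (1 : ℝ) else 0) + c) μ μ[|{x | p i x}]) :
    ExistsBoundedSizeBiasCoupling
      (μ.map fun x => ∑ i, w i * if p i x then (1 : ℝ) else 0) c := by
  have hcond (i : ι) := cond_isProbabilityMeasure (hμp i)
  have hmeas : Measurable fun x => ∑ i, w i * if p i x then (1 : ℝ) else 0 :=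
    Finset.measurable_fun_sum _ fun i _ =>
      (Measurable.ite (hp i) measurable_const measurable_const).const_mul _
  have hmean : ∫ x, (∑ i, w i * if p i x then (1 : ℝ) else 0) ∂μ =
      ∑ i, w i * μ.real {x | p i x} := by
    simpa using integral_sum_mul_ite_mul (w := w) hp (integrable_const (μ := μ) (1 : ℝ))
  have hpos (i : ι) : 0 < w i * μ.real {x | p i x} :=
    mul_pos (hw i) (ENNReal.toReal_pos (hμp i) (measure_ne_top _ _))
  have hsum : 0 < ∑ i, w i * μ.real {x | p i x} :=
    Finset.sum_pos (fun i _ => hpos i) Finset.univ_nonempty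
  have hweight (i : ι) := (div_pos (hpos i) hsum).le
  have hone :
      ∑ i, ENNReal.ofReal (w i * μ.real {x | p i x} / ∑ j, w j * μ.real {x | p j x}) = 1 := by
    rw [← ENNReal.ofReal_sum_of_nonneg fun i _ => hweight i, ← Finset.sum_div, div_self hsum.ne',
      ENNReal.ofReal_one]
  refine existsBoundedSizeBiasCoupling_map hmeas (.sum hone h) fun f hf ⟨C, hC⟩ => ?_
  have hint (ρ : Measure X) [IsFiniteMeasure ρ] :
      Integrable (fun x => f (∑ i, w i * if p i x then (1 : ℝ) else 0)) ρ :=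
    .of_bound (hf.comp hmeas).aestronglyMeasurable C (.of_forall fun x => hC _)
  rw [integral_sum_mul_ite_mul hp (hint μ), hmean,
    integral_finsetSum_measure fun i _ => (hint _).smul_measure ENNReal.ofReal_ne_top,
    Finset.mul_sum]
  refine Finset.sum_congr rfl fun i _ => ?_
  rw [integral_smul_measure, ENNReal.toReal_ofReal (hweight i), smul_eq_mul, ← mul_assoc,
    mul_div_cancel₀ _ hsum.ne']

end SizeBias

section ColorCounts

variable {β : Type*} {s : ℕ}

theorem measure_map_eq_sampleLaw [Fintype β] {Ω : Type*} [MeasurableSpace Ω] {P : Measure Ω}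
    {S : Ω → Finset β} (hS : Measurable S) (hcard : ∀ ω, #(S ω) = s)
    (hunif : ∀ T : Finset β, #T = s → P {ω | S ω = T} = 1 / (Fintype.card β).choose s) :
    P.map S = sampleLaw β s := by
  classical
  refine Measure.ext_of_singleton fun T => ?_
  rw [Measure.map_apply hS .of_discrete, ← ofPred_eq_eq_singleton, sampleLaw_apply]
  by_cases hT : #T = s
  · have hfilter : ({T' | #T' = s ∧ T' = T} : Finset (Finset β)) = {T} := by grind
    rw [hfilter, Finset.card_singleton, Nat.cast_one]
    exact hunif T hT
  · have hfilter : ({T' | #T' = s ∧ T' = T} : Finset (Finset β)) = ∅ := by grind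
    have hpre : S ⁻¹' {T' | T' = T} = ∅ :=
      eq_empty_of_forall_notMem fun ω (h : S ω = T) => hT (h ▸ hcard ω)
    rw [hfilter, hpre, measure_empty, Finset.card_empty, Nat.cast_zero, ENNReal.zero_div]

variable {ι : Type*} [Finite β] [Fintype ι] [Nonempty ι] [DecidableEq ι] {col : β → ι} {w : ι → ℝ}
  {W : ℝ}

theorem existsBoundedSizeBiasCoupling_sampleLaw_ge (hs : s ≤ Nat.card β) (hw : ∀ i, 0 < w i)
    (hW : ∀ i, w i ≤ W) (d : ι → ℤ)
    (hd : ∀ i, sampleLaw β s {T | d i ≤ #{x ∈ T | col x = i}} ≠ 0) :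
    ExistsBoundedSizeBiasCoupling ((sampleLaw β s).map fun T =>
      ∑ i, w i * if d i ≤ #{x ∈ T | col x = i} then (1 : ℝ) else 0) W := by
  classical
  have := Fintype.ofFinite β
  have := isProbabilityMeasure_sampleLaw hs
  refine existsBoundedSizeBiasCoupling_map_sum_mul_ite hw (fun _ => .of_discrete) hd fun i => ?_
  obtain ⟨A, hA⟩ : ∃ A : Finset β, ∀ x, x ∈ A ↔ col x = i := ⟨.filter (col · = i) .univ, by simp⟩
  have hinter (T : Finset β) : T.filter (col · = i) = T ∩ A := by grind
  have hdi := hd i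
  simp only [hinter] at hdi ⊢
  have hmono : Monotone fun k : ℕ => d i ≤ k := fun k l hkl h => h.trans (Nat.cast_le.2 hkl)
  refine (hasCoupling_sampleLaw_cond_of_monotone hs hmono hdi).mono fun T T' hsub => ?_
  have hothers (j : ι) (hj : j ∉ ({i} : Finset ι)) :
      T'.filter (col · = j) ⊆ T.filter (col · = j) := fun x hx => by grind
  simpa using sum_mul_ite_le_add (fun j => (hw j).le) hW {i} fun j hj h =>
    le_trans h (Nat.cast_le.2 (Finset.card_le_card (hothers j hj)))

theorem existsBoundedSizeBiasCoupling_sampleLaw_ne (hs : s ≤ Nat.card β) (hw : ∀ i, 0 < w i)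
    (hW : ∀ i, w i ≤ W) (d : ι → ℕ)
    (hd : ∀ i, sampleLaw β s {T | #{x ∈ T | col x = i} ≠ d i} ≠ 0) :
    ExistsBoundedSizeBiasCoupling ((sampleLaw β s).map fun T =>
      ∑ i, w i * if #{x ∈ T | col x = i} ≠ d i then (1 : ℝ) else 0) (2 * W) := by
  classical
  have := Fintype.ofFinite β
  have := isProbabilityMeasure_sampleLaw hs
  refine existsBoundedSizeBiasCoupling_map_sum_mul_ite hw (fun _ => .of_discrete) hd fun i => ?_
  obtain ⟨A, hA⟩ : ∃ A : Finset β, ∀ x, x ∈ A ↔ col x = i := ⟨.filter (col · = i) .univ, by simp⟩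
  have hinter (T : Finset β) : T.filter (col · = i) = T ∩ A := by grind
  have hdi := hd i
  simp only [hinter] at hdi ⊢
  refine (hasCoupling_sampleLaw_cond_ne hs (d i) hdi).mono fun T T' hsymm => ?_
  have hothers (j : ι) (hj : j ∉ (T ∆ T').image col) :
      T'.filter (col · = j) = T.filter (col · = j) := by
    ext x
    grind [Finset.mem_symmDiff]
  have hW0 : 0 ≤ W := (hw i).le.trans (hW i)
  refine (sum_mul_ite_le_add (fun j => (hw j).le) hW ((T ∆ T').image col) fun j hj h => ?_).trans
    (by gcongr; exact_mod_cast Finset.card_image_le.trans hsymm)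
  rwa [← hothers j hj]

end ColorCounts

/-- Bounded size bias couplings for color counts in multivariate hypergeometric
sampling: an urn holds `n = Σ_α n_α` balls, `n_α ≥ 1` of color `α` (ball `i` has color
`col i`), a uniformly random sample `S` of `s` distinct balls is drawn without
replacement, and `M_α` is the number of balls of color `α` in the sample. Then
`Y_ge = Σ_α w_α 𝟙(M_α ≥ d_α)` admits a size bias coupling bounded by `|w|` and
`Y_ne = Σ_α w_α 𝟙(M_α ≠ d_α)` one bounded by `2|w|`. -/
theorem hypergeometric_sampling_size_bias_coupling
    {Ω : Type*} [MeasurableSpace Ω] (P : Measure Ω) [IsProbabilityMeasure P]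
    (m n : ℕ) (hm : 0 < m)
    (nballs : Fin m → ℕ) (hnballs : ∀ α, 1 ≤ nballs α) (hn : n = ∑ α, nballs α)
    (col : Fin n → Fin m)
    (hcol : ∀ α, (Finset.univ.filter fun i => col i = α).card = nballs α)
    (s : ℕ) (hs : s ≤ n)
    (S : Ω → Finset (Fin n))
    (hSmeas : ∀ T : Finset (Fin n), MeasurableSet {ω | S ω = T})
    (hScard : ∀ ω, (S ω).card = s)
    (hSunif : ∀ T : Finset (Fin n), T.card = s →
      P {ω | S ω = T} = 1 / (n.choose s : ENNReal))
    (M : Fin m → Ω → ℕ)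
    (hM : ∀ α ω, M α ω = ((S ω).filter fun i => col i = α).card)
    (w : Fin m → ℝ) (hw : ∀ α, 0 < w α) (d : Fin m → ℤ)
    (hge_nc : ∀ α, 0 < P {ω | d α ≤ (M α ω : ℤ)} ∧ P {ω | d α ≤ (M α ω : ℤ)} < 1)
    (hne_nc : ∀ α, 0 < P {ω | (M α ω : ℤ) ≠ d α} ∧ P {ω | (M α ω : ℤ) ≠ d α} < 1) :
    ExistsBoundedSizeBiasCoupling
      (Measure.map (fun ω => ∑ α, w α * if d α ≤ (M α ω : ℤ) then (1 : ℝ) else 0) P)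
      (Finset.univ.sup' (Finset.univ_nonempty_iff.mpr (Fin.pos_iff_nonempty.mp hm)) w) ∧
    ExistsBoundedSizeBiasCoupling
      (Measure.map (fun ω => ∑ α, w α * if (M α ω : ℤ) ≠ d α then (1 : ℝ) else 0) P)
      (2 * Finset.univ.sup' (Finset.univ_nonempty_iff.mpr (Fin.pos_iff_nonempty.mp hm)) w) := by
  have : Nonempty (Fin m) := Fin.pos_iff_nonempty.mp hm
  have hsn : s ≤ Nat.card (Fin n) := by rwa [Nat.card_fin]
  have hW (α : Fin m) := Finset.le_sup' w (Finset.mem_univ α)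
  have hS : Measurable S := measurable_to_countable' hSmeas
  have hlaw : P.map S = sampleLaw (Fin n) s :=
    measure_map_eq_sampleLaw hS hScard (by rwa [Fintype.card_fin])
  have hmap (F : Finset (Fin n) → ℝ) : P.map (fun ω => F (S ω)) = (sampleLaw (Fin n) s).map F := by
    rw [← hlaw, Measure.map_map .of_discrete hS, Function.comp_def]
  have happly (p : Finset (Fin n) → Prop) :
      P {ω | p (S ω)} = sampleLaw (Fin n) s {T | p T} := by
    rw [← hlaw, Measure.map_apply hS .of_discrete, preimage_ofPred_eq]
  have hd (α : Fin m) : 0 ≤ d α := by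
    by_contra! h
    exact (hne_nc α).2.ne ((congrArg P (eq_univ_of_forall fun ω => by grind)).trans measure_univ)
  lift d to Fin m → ℕ using hd
  simp only [hM, ne_eq, Nat.cast_inj] at hge_nc hne_nc ⊢
  constructor
  · rw [hmap fun T => ∑ α, w α * if (d α : ℤ) ≤ #{x ∈ T | col x = α} then 1 else 0]
    exact existsBoundedSizeBiasCoupling_sampleLaw_ge hsn hw hW _ fun α =>
      happly (fun T => (d α : ℤ) ≤ #{x ∈ T | col x = α}) ▸ (hge_nc α).1.ne'
  · rw [hmap fun T => ∑ α, w α * if ¬ #{x ∈ T | col x = α} = d α then 1 else 0]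
    exact existsBoundedSizeBiasCoupling_sampleLaw_ne hsn hw hW _ fun α =>
      happly (fun T => ¬ #{x ∈ T | col x = α} = d α) ▸ (hne_nc α).1.ne'
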